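/- arXiv:2112.13024 — 2 statements merged into one kernel-verified Lean document; each statement's English description precedes it below -/
import Mathlib

section
/- If T_1 and T_2 are trees each of order at least 3, then μ(T_1 □ T_2) ≥ μ(T_1)·μ(T_2). -/
open SimpleGraph

/-- Two vertices `u v ∈ X` are `X`-visible in `G`: there is a shortest `u,v`-path
whose only vertices in `X` are `u` and `v`. -/
def VisiblePair {V : Type*} (G : SimpleGraph V) (X : Set V) (u v : V) : Prop :=
  ∃ p : G.Walk u v, p.IsPath ∧ p.length = G.dist u v ∧
    ∀ w ∈ p.support, w ∈ X → w = u ∨ w = v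

/-- `X` is a mutual-visibility set of `G`. -/
def IsMVSet {V : Type*} (G : SimpleGraph V) (X : Set V) : Prop :=
  ∀ u ∈ X, ∀ v ∈ X, u ≠ v → VisiblePair G X u v

/-- `X` is an independent set of `G`. -/
def IsIndep {V : Type*} (G : SimpleGraph V) (X : Set V) : Prop :=
  ∀ u ∈ X, ∀ v ∈ X, ¬ G.Adj u v

/-- The mutual-visibility number `μ(G)`. -/
noncomputable def mu {V : Type*} (G : SimpleGraph V) : ℕ :=
  sSup {n | ∃ X : Set V, IsMVSet G X ∧ X.ncard = n}

/-- The independent mutual-visibility number `μᵢ(G)`. -/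
noncomputable def muI {V : Type*} (G : SimpleGraph V) : ℕ :=
  sSup {n | ∃ X : Set V, IsMVSet G X ∧ IsIndep G X ∧ X.ncard = n}

/-- The independence number `α(G)`. -/
noncomputable def indepNumber {V : Type*} (G : SimpleGraph V) : ℕ :=
  sSup {n | ∃ X : Set V, IsIndep G X ∧ X.ncard = n}

/-!
Let `X` be an independent mutual-visibility set of `G` and `Y` a mutual-visibility set of `H`.
Then `X ×ˢ Y` is a mutual-visibility set of `G □ H`: to get from `(a, b)` to `(a', b')` with
`a ≠ a'`, take the first step of a good shortest path from `a` to `a'`, which leaves `X` by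
independence, then cross the fibre of `H` over that vertex, which avoids `X ×ˢ Y`, and then finish
the path to `a'`. Hence `μᵢ(G) * μ(H) ≤ μ(G □ H)`. In a forest, a mutual-visibility set with two
adjacent vertices contains nothing else, so in a component of order at least `3` it can be exchanged
for a pair of nonadjacent vertices, and `μᵢ = μ`.
-/

section BoxProd

variable {V W : Type*} {G : SimpleGraph V} {H : SimpleGraph W}

theorem dist_boxProd {x y : V × W} (hG : G.Reachable x.1 y.1) (hH : H.Reachable x.2 y.2) :
    (G □ H).dist x y = G.dist x.1 y.1 + H.dist x.2 y.2 := by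
  rw [SimpleGraph.dist, edist_boxProd, ENat.toNat_add (edist_ne_top_iff_reachable.2 hG)
    (edist_ne_top_iff_reachable.2 hH)]
  rfl

theorem length_walk_boxProdLeft {a a' : V} (b : W) (p : G.Walk a a') :
    (p.boxProdLeft H b).length = p.length :=
  Walk.length_map _ _

theorem length_walk_boxProdRight {b b' : W} (a : V) (q : H.Walk b b') :
    (q.boxProdRight G a).length = q.length :=
  Walk.length_map _ _

theorem mem_support_walk_boxProdLeft {a a' : V} {b : W} {p : G.Walk a a'} {z : V × W} :
    z ∈ (p.boxProdLeft H b).support ↔ ∃ x ∈ p.support, (x, b) = z :=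
  (congrArg (z ∈ ·) (Walk.support_map _ _)).to_iff.trans List.mem_map

theorem mem_support_walk_boxProdRight {b b' : W} {a : V} {q : H.Walk b b'} {z : V × W} :
    z ∈ (q.boxProdRight G a).support ↔ ∃ y ∈ q.support, (a, y) = z :=
  (congrArg (z ∈ ·) (Walk.support_map _ _)).to_iff.trans List.mem_map

end BoxProd

section Visibility

variable {V W : Type*} {G : SimpleGraph V} {H : SimpleGraph W} {X : Set V} {Y : Set W}

theorem VisiblePair.of_walk {u v : V} (p : G.Walk u v) (hp : p.length = G.dist u v)
    (hX : ∀ w ∈ p.support, w ∈ X → w = u ∨ w = v) : VisiblePair G X u v :=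
  ⟨p, p.isPath_of_length_eq_dist hp, hp, hX⟩

theorem VisiblePair.refl (G : SimpleGraph V) (X : Set V) (u : V) : VisiblePair G X u u :=
  .of_walk .nil (by simp) (by simp)

theorem VisiblePair.pair {u v : V} (h : G.Reachable u v) : VisiblePair G {u, v} u v := by
  obtain ⟨p, hp⟩ := h.exists_walk_length_eq_dist
  exact .of_walk p hp fun _ _ hw ↦ hw

theorem VisiblePair.symm {u v : V} (h : VisiblePair G X u v) : VisiblePair G X v u := by
  obtain ⟨p, -, hp, hpX⟩ := h
  refine .of_walk p.reverse (by rw [Walk.length_reverse, hp, dist_comm]) fun w hw hwX ↦ ?_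
  rw [Walk.support_reverse, List.mem_reverse] at hw
  exact (hpX w hw hwX).symm

theorem VisiblePair.boxProd_right {b b' : W} (h : VisiblePair H Y b b') (X : Set V) (a : V) :
    VisiblePair (G □ H) (X ×ˢ Y) (a, b) (a, b') := by
  obtain ⟨q, -, hq, hqY⟩ := h
  refine .of_walk (q.boxProdRight G a) ?_ fun z hz hzXY ↦ ?_
  · rw [length_walk_boxProdRight, hq, dist_boxProd (.refl a) q.reachable, dist_self, zero_add]
  · obtain ⟨y, hy, rfl⟩ := mem_support_walk_boxProdRight.1 hz
    exact (hqY y hy hzXY.2).imp (congrArg _) (congrArg _)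

theorem VisiblePair.boxProd_of_ne {a a' : V} {b b' : W} (hG : VisiblePair G X a a')
    (hH : VisiblePair H Y b b') (hne : a ≠ a') (ha : ∀ c, G.Adj a c → c ∉ X) :
    VisiblePair (G □ H) (X ×ˢ Y) (a, b) (a', b') := by
  obtain ⟨p, hp, hpl, hpX⟩ := hG
  obtain ⟨q, -, hql, -⟩ := hH
  cases p with
  | nil => exact absurd rfl hne
  | @cons _ c _ hac p =>
    refine .of_walk (.cons (boxProd_adj_left.2 hac)
      ((q.boxProdRight G c).append (p.boxProdLeft H b'))) ?_ ?_
    · rw [dist_boxProd (p.cons hac).reachable q.reachable, ← hpl, ← hql]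
      simp only [Walk.length_cons, Walk.length_append, length_walk_boxProdRight,
        length_walk_boxProdLeft]
      omega
    · simp only [Walk.support_cons, List.mem_cons, Walk.mem_support_append_iff,
        mem_support_walk_boxProdRight, mem_support_walk_boxProdLeft]
      rintro _ (rfl | ⟨y, -, rfl⟩ | ⟨x, hx, rfl⟩) ⟨hxX, -⟩
      · exact .inl rfl
      · exact absurd hxX (ha c hac)
      · have hxa : x ≠ a := fun h ↦ ((Walk.cons_isPath_iff hac p).1 hp).2 (h ▸ hx)
        have hxa' : x = a' := (hpX x (List.mem_cons_of_mem _ hx) hxX).resolve_left hxa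
        exact .inr (congrArg (·, b') hxa')

theorem IsMVSet.visiblePair (hX : IsMVSet G X) {u v : V} (hu : u ∈ X) (hv : v ∈ X) :
    VisiblePair G X u v := by
  obtain rfl | huv := eq_or_ne u v
  · exact .refl G X u
  · exact hX u hu v hv huv

theorem isMVSet_pair {u v : V} (h : G.Reachable u v) : IsMVSet G {u, v} := by
  rintro x (rfl | rfl) y (rfl | rfl) hxy
  · exact absurd rfl hxy
  · exact .pair h
  · exact (VisiblePair.pair h).symm
  · exact absurd rfl hxy

theorem isIndep_pair {u v : V} (h : ¬ G.Adj u v) : IsIndep G {u, v} := by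
  rintro x (rfl | rfl) y (rfl | rfl)
  · exact G.irrefl
  · exact h
  · exact fun hvu ↦ h hvu.symm
  · exact G.irrefl

theorem IsMVSet.boxProd (hX : IsMVSet G X) (hXi : IsIndep G X) (hY : IsMVSet H Y) :
    IsMVSet (G □ H) (X ×ˢ Y) := by
  rintro ⟨a, b⟩ ⟨ha, hb⟩ ⟨a', b'⟩ ⟨ha', hb'⟩ -
  obtain rfl | hne := eq_or_ne a a'
  · exact (hY.visiblePair hb hb').boxProd_right X a
  · exact (hX a ha a' ha' hne).boxProd_of_ne (hY.visiblePair hb hb') hne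
      fun c hac hc ↦ hXi a ha c hc hac

end Visibility

section Numbers

variable {V W : Type*} [Finite V] [Finite W]

theorem bddAbove_ncard_isMVSet (G : SimpleGraph V) :
    BddAbove {n | ∃ X : Set V, IsMVSet G X ∧ X.ncard = n} := by
  refine ⟨Nat.card V, ?_⟩
  rintro _ ⟨X, -, rfl⟩
  exact X.ncard_le_card

theorem bddAbove_ncard_isMVSet_isIndep (G : SimpleGraph V) :
    BddAbove {n | ∃ X : Set V, IsMVSet G X ∧ IsIndep G X ∧ X.ncard = n} := by
  refine (bddAbove_ncard_isMVSet G).mono ?_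
  rintro _ ⟨X, hX, -, rfl⟩
  exact ⟨X, hX, rfl⟩

theorem IsMVSet.ncard_le_mu {G : SimpleGraph V} {X : Set V} (hX : IsMVSet G X) :
    X.ncard ≤ mu G :=
  le_csSup (bddAbove_ncard_isMVSet G) ⟨X, hX, rfl⟩

theorem IsMVSet.ncard_le_muI {G : SimpleGraph V} {X : Set V} (hX : IsMVSet G X)
    (hXi : IsIndep G X) : X.ncard ≤ muI G :=
  le_csSup (bddAbove_ncard_isMVSet_isIndep G) ⟨X, hX, hXi, rfl⟩

theorem exists_isMVSet_ncard_eq_mu (G : SimpleGraph V) :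
    ∃ X : Set V, IsMVSet G X ∧ X.ncard = mu G :=
  Nat.sSup_mem (s := {n | ∃ X : Set V, IsMVSet G X ∧ X.ncard = n})
    ⟨0, ∅, by simp [IsMVSet], Set.ncard_empty V⟩ (bddAbove_ncard_isMVSet G)

theorem exists_isMVSet_isIndep_ncard_eq_muI (G : SimpleGraph V) :
    ∃ X : Set V, IsMVSet G X ∧ IsIndep G X ∧ X.ncard = muI G :=
  Nat.sSup_mem (s := {n | ∃ X : Set V, IsMVSet G X ∧ IsIndep G X ∧ X.ncard = n})
    ⟨0, ∅, by simp [IsMVSet], by simp [IsIndep], Set.ncard_empty V⟩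
    (bddAbove_ncard_isMVSet_isIndep G)

theorem muI_le_mu (G : SimpleGraph V) : muI G ≤ mu G := by
  obtain ⟨X, hX, -, hcard⟩ := exists_isMVSet_isIndep_ncard_eq_muI G
  exact hcard ▸ hX.ncard_le_mu

theorem muI_mul_mu_le_mu_boxProd (G : SimpleGraph V) (H : SimpleGraph W) :
    muI G * mu H ≤ mu (G □ H) := by
  obtain ⟨X, hX, hXi, hXcard⟩ := exists_isMVSet_isIndep_ncard_eq_muI G
  obtain ⟨Y, hY, hYcard⟩ := exists_isMVSet_ncard_eq_mu H
  rw [← hXcard, ← hYcard, ← Set.ncard_prod]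
  exact (hX.boxProd hXi hY).ncard_le_mu

end Numbers

section Forest

variable {V : Type*}

theorem IsMVSet.eq_pair_of_adj {T : SimpleGraph V} (hT : T.IsAcyclic) {X : Set V}
    (hX : IsMVSet T X) {u v : V} (hu : u ∈ X) (hv : v ∈ X) (huv : T.Adj u v) : X = {u, v} := by
  refine (Set.pair_subset hu hv).antisymm' fun w hw ↦ ?_
  by_contra! hne
  obtain ⟨hwu, hwv⟩ : w ≠ u ∧ w ≠ v := by simpa using hne
  obtain ⟨p, hp, -, hpX⟩ := hX w hw u hu hwu
  obtain ⟨q, hq, -, hqX⟩ := hX w hw v hv hwv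
  have hvp : v ∉ p.support := fun h ↦ (hpX v h hv).elim hwv.symm huv.ne'
  have huq : u ∈ q.support :=
    hT.mem_support_of_ne_mem_support_of_adj_of_isPath hq hp huv.symm hvp
  exact (hqX u huq hu).elim hwu.symm huv.ne

theorem ncard_supp_of_preconnected {G : SimpleGraph V} (hG : G.Preconnected)
    (c : G.ConnectedComponent) : c.supp.ncard = Nat.card V := by
  have := hG.subsingleton_connectedComponent
  rw [← Set.ncard_univ, Set.eq_univ_of_forall fun v ↦ (c.mem_supp_iff v).2 (Subsingleton.elim _ _)]

theorem exists_reachable_ne_not_adj_of_cliqueFree_three {G : SimpleGraph V}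
    (hG : G.CliqueFree 3) {c : G.ConnectedComponent} (hc : 3 ≤ c.supp.ncard) :
    ∃ u v, G.Reachable u v ∧ u ≠ v ∧ ¬ G.Adj u v := by
  classical
  by_contra! hadj
  obtain ⟨x, hx, y, hy, z, hz, hxy, hxz, hyz⟩ :=
    (Set.two_lt_ncard (Set.finite_of_ncard_pos (by omega))).1 hc
  have adj_of_mem {u v : V} (hu : u ∈ c.supp) (hv : v ∈ c.supp) (huv : u ≠ v) : G.Adj u v :=
    hadj u v (c.reachable_of_mem_supp hu hv) huv
  exact hG {x, y, z}
    (is3Clique_triple_iff.2 ⟨adj_of_mem hx hy hxy, adj_of_mem hx hz hxz, adj_of_mem hy hz hyz⟩)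

theorem muI_eq_mu_of_isAcyclic [Finite V] {T : SimpleGraph V} (hT : T.IsAcyclic)
    {c : T.ConnectedComponent} (hc : 3 ≤ c.supp.ncard) : muI T = mu T := by
  refine (muI_le_mu T).antisymm ?_
  obtain ⟨X, hX, hcard⟩ := exists_isMVSet_ncard_eq_mu T
  rw [← hcard]
  by_cases hXi : IsIndep T X
  · exact hX.ncard_le_muI hXi
  obtain ⟨u, hu, v, hv, huv⟩ : ∃ u ∈ X, ∃ v ∈ X, T.Adj u v := by
    simpa [IsIndep] using hXi
  obtain ⟨a, b, hreach, hab, hnadj⟩ :=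
    exists_reachable_ne_not_adj_of_cliqueFree_three (hT.cliqueFree le_rfl) hc
  calc X.ncard = 2 := by rw [hX.eq_pair_of_adj hT hu hv huv, Set.ncard_pair huv.ne]
    _ = ({a, b} : Set V).ncard := (Set.ncard_pair hab).symm
    _ ≤ muI T := (isMVSet_pair hreach).ncard_le_muI (isIndep_pair hnadj)

end Forest

theorem stmt9_general {V W : Type*} [Finite V] [Finite W] {T : SimpleGraph V}
    (H : SimpleGraph W) (hT : T.IsAcyclic) {c : T.ConnectedComponent} (hc : 3 ≤ c.supp.ncard) :
    mu T * mu H ≤ mu (T □ H) :=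
  muI_eq_mu_of_isAcyclic hT hc ▸ muI_mul_mu_le_mu_boxProd T H

theorem stmt9 {V W : Type*} [Fintype V] [Fintype W] (T₁ : SimpleGraph V)
    (T₂ : SimpleGraph W) (h₁ : T₁.IsTree) (h₂ : T₂.IsTree)
    (hc₁ : 3 ≤ Fintype.card V) (hc₂ : 3 ≤ Fintype.card W) :
    mu T₁ * mu T₂ ≤ mu (T₁.boxProd T₂) := by
  obtain ⟨v⟩ := h₁.connected.nonempty
  refine stmt9_general T₂ h₁.isAcyclic (c := T₁.connectedComponentMk v) ?_
  rwa [ncard_supp_of_preconnected h₁.connected.preconnected, Nat.card_eq_fintype_card]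
end

section
/- If T is a tree with at least 3 vertices and L is its set of leaves, then L is a mutual-visibility set of T, L is an independent set, and μ(T) = |L| = μ_i(T). -/
open SimpleGraph

/-!
Let `X` be a mutual-visibility set of a tree and `x ∈ X`. Choose `b ∈ X` other than `x` and extend
the geodesic from `b` to `x` up to a leaf `l`. For every other `y ∈ X`, the geodesic from `b` to
`l` is covered by those from `b` to `y` and from `y` to `l`; visibility of `b` and `y` excludes `x`
from the former, so `x` lies between `l` and every member of `X`. Two different members of `X`
cannot do this for the same leaf, hence `x ↦ l` is injective and `X` has at most as many elements
as there are leaves. The leaves themselves attain this bound, because a path cannot pass through a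
leaf, and they are independent as soon as there is a third vertex.
-/

section GeodesicInterval

variable {V : Type*} {G : SimpleGraph V} {l m n u v w : V}

/-- The geodesic interval `I(u, v)`: the vertices metrically between `u` and `v`. In a connected
graph these are the vertices on shortest `u,v`-paths; in a tree, those on the only `u,v`-path.
It is not meaningful across components, where `dist` is `0`. -/
def geodesicInterval (G : SimpleGraph V) (u v : V) : Set V :=
  {w | G.dist u w + G.dist w v = G.dist u v}

lemma mem_geodesicInterval_iff :
    w ∈ geodesicInterval G u v ↔ G.dist u w + G.dist w v = G.dist u v :=
  Iff.rfl

lemma left_mem_geodesicInterval : u ∈ geodesicInterval G u v := by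
  simp [mem_geodesicInterval_iff]

lemma right_mem_geodesicInterval : v ∈ geodesicInterval G u v := by
  simp [mem_geodesicInterval_iff]

lemma geodesicInterval_comm (u v : V) : geodesicInterval G u v = geodesicInterval G v u := by
  ext w
  rw [mem_geodesicInterval_iff, mem_geodesicInterval_iff, dist_comm (u := u) (v := w),
    dist_comm (u := w) (v := v), dist_comm (u := u) (v := v), add_comm]

lemma geodesicInterval_self (hG : G.Connected) (u : V) : geodesicInterval G u u = {u} := by
  ext w
  simp [mem_geodesicInterval_iff, hG.dist_eq_zero_iff, eq_comm]

lemma geodesicInterval_subset_of_mem (hG : G.Connected) (hv : v ∈ geodesicInterval G u w) :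
    geodesicInterval G u v ⊆ geodesicInterval G u w := by
  intro x hx
  rw [mem_geodesicInterval_iff] at hx hv ⊢
  have h_xvw := hG.dist_triangle (u := x) (v := v) (w := w)
  have h_uxw := hG.dist_triangle (u := u) (v := x) (w := w)
  omega

lemma eq_of_mem_geodesicInterval_of_mem_geodesicInterval (hG : G.Connected)
    (hu : u ∈ geodesicInterval G v w) (hv : v ∈ geodesicInterval G u w) : u = v := by
  rw [mem_geodesicInterval_iff] at hu hv
  exact hG.dist_eq_zero_iff.1 (by omega)

lemma mem_geodesicInterval_of_mem_support {p : G.Walk u v}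
    (hp : p.length = G.dist u v) (hw : w ∈ p.support) : w ∈ geodesicInterval G u v := by
  classical
  have hsplit := congrArg Walk.length (p.take_spec hw)
  rw [Walk.length_append] at hsplit
  have h_uw := dist_le (p.takeUntil w hw)
  have h_wv := dist_le (p.dropUntil w hw)
  have h_uwv := (p.takeUntil w hw).reachable.dist_triangle_left v
  rw [mem_geodesicInterval_iff]
  omega

lemma mem_support_of_mem_geodesicInterval (hG : G.IsTree) (hw : w ∈ geodesicInterval G u v)
    (p : G.Walk u v) : w ∈ p.support := by
  classical
  obtain ⟨q, hq⟩ := hG.connected.exists_walk_length_eq_dist u w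
  obtain ⟨r, hr⟩ := hG.connected.exists_walk_length_eq_dist w v
  have hqr : (q.append r).IsPath :=
    Walk.isPath_of_length_eq_dist _ (by rw [Walk.length_append, hq, hr, hw])
  have hbypass : p.bypass = q.append r :=
    (hG.existsUnique_path u v).unique p.bypass_isPath hqr
  refine p.support_bypass_subset_support ?_
  rw [hbypass, Walk.mem_support_append_iff]
  exact Or.inl q.end_mem_support

lemma geodesicInterval_subset_union (hG : G.IsTree) (u v w : V) :
    geodesicInterval G u w ⊆ geodesicInterval G u v ∪ geodesicInterval G v w := by
  intro x hx
  obtain ⟨p, hp⟩ := hG.connected.exists_walk_length_eq_dist u v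
  obtain ⟨q, hq⟩ := hG.connected.exists_walk_length_eq_dist v w
  have hxpq : x ∈ (p.append q).support := mem_support_of_mem_geodesicInterval hG hx _
  exact ((Walk.mem_support_append_iff p q).1 hxpq).imp
    (mem_geodesicInterval_of_mem_support hp)
    (mem_geodesicInterval_of_mem_support hq)

lemma mem_geodesicInterval_of_adj_of_adj (hG : G.IsAcyclic) (hm : G.Adj l m) (hn : G.Adj l n)
    (hmn : m ≠ n) : l ∈ geodesicInterval G m n := by
  have h_pos := (hm.symm.reachable.trans hn.reachable).pos_dist_of_ne hmn
  have h_ml : G.dist m l = 1 := dist_eq_one_iff_adj.2 hm.symm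
  have h_ln : G.dist l n = 1 := dist_eq_one_iff_adj.2 hn
  have h_step := hG.dist_eq_dist_add_one_of_adj_of_reachable m hn hm.symm.reachable
  rw [mem_geodesicInterval_iff]
  omega

lemma exists_adj_mem_geodesicInterval (hG : G.IsTree) (b : V) (hl : (G.neighborSet l).Nontrivial) :
    ∃ m, G.Adj l m ∧ l ∈ geodesicInterval G b m := by
  obtain ⟨m, hm, n, hn, hmn⟩ := hl
  have hl_mn := mem_geodesicInterval_of_adj_of_adj hG.isAcyclic hm hn hmn
  rcases geodesicInterval_subset_union hG m b n hl_mn with hl_mb | hl_bn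
  · exact ⟨m, hm, geodesicInterval_comm m b ▸ hl_mb⟩
  · exact ⟨n, hn, hl_bn⟩

end GeodesicInterval

section Leaves

variable {V : Type*} {G : SimpleGraph V} [G.LocallyFinite] {v : V}

/-- The set of leaves of a graph, whose size turns out to be `μ` and `μᵢ` of a tree; local
finiteness makes the degree of every vertex available. -/
def leaves (G : SimpleGraph V) [G.LocallyFinite] : Set V :=
  {v | G.degree v = 1}

lemma neighborSet_subsingleton_of_mem_leaves (hv : v ∈ leaves G) :
    (G.neighborSet v).Subsingleton :=
  fun _ hu _ hw => (degree_eq_one_iff_existsUnique_adj.1 hv).unique hu hw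

lemma neighborSet_nontrivial_of_notMem_leaves [Nontrivial V] (hG : G.Preconnected)
    (hv : v ∉ leaves G) : (G.neighborSet v).Nontrivial := by
  have hpos : 0 < G.degree v := hG.degree_pos_of_nontrivial v
  have hone : 1 < (G.neighborFinset v).card := lt_of_le_of_ne hpos (Ne.symm hv)
  rw [← coe_neighborFinset]
  exact Finset.one_lt_card_iff_nontrivial.1 hone

lemma eq_or_eq_of_mem_leaves_of_mem_support {u w : V} {p : G.Walk u w} (hp : p.IsTrail)
    (hv : v ∈ leaves G) (hvp : v ∈ p.support) : v = u ∨ v = w := by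
  by_contra! hne
  exact hp.not_mem_support_of_subsingleton_neighborSet hne.1 hne.2
    (neighborSet_subsingleton_of_mem_leaves hv) hvp

lemma isMVSet_leaves (hG : G.Connected) : IsMVSet G (leaves G) := by
  intro u _ v _ _
  obtain ⟨p, hp, hdist⟩ := hG.exists_path_of_dist u v
  exact ⟨p, hp, hdist, fun w hwp hw =>
    eq_or_eq_of_mem_leaves_of_mem_support hp.isTrail hw hwp⟩

lemma isIndep_leaves (hG : G.Connected) (hV : 3 ≤ ENat.card V) : IsIndep G (leaves G) := by
  intro u hu v hv huv
  obtain ⟨z, hzu, hzv⟩ := ENat.exists_ne_ne_of_three_le hV u v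
  obtain ⟨p, hp⟩ := hG.exists_isPath u z
  have hsnd : p.snd = v := neighborSet_subsingleton_of_mem_leaves hu
    (p.adj_snd (Walk.not_nil_of_ne hzu.symm)) huv
  have hvp : v ∈ p.support := hsnd ▸ p.getVert_mem_support 1
  rcases eq_or_eq_of_mem_leaves_of_mem_support hp.isTrail hv hvp with hvu | hvz
  · exact huv.ne hvu.symm
  · exact hzv hvz.symm

lemma exists_mem_leaves_mem_geodesicInterval [Finite V] [Nontrivial V] (hG : G.IsTree) (b x : V) :
    ∃ l ∈ leaves G, x ∈ geodesicInterval G b l := by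
  obtain ⟨l, hxl, hmax⟩ := Set.exists_max_image {l | x ∈ geodesicInterval G b l} (G.dist b)
    (Set.toFinite _) ⟨x, right_mem_geodesicInterval⟩
  refine ⟨l, ?_, hxl⟩
  by_contra hl
  obtain ⟨m, hlm, hl_bm⟩ := exists_adj_mem_geodesicInterval hG b
    (neighborSet_nontrivial_of_notMem_leaves hG.connected.preconnected hl)
  have hle : G.dist b m ≤ G.dist b l :=
    hmax m (geodesicInterval_subset_of_mem hG.connected hl_bm hxl)
  rw [mem_geodesicInterval_iff, dist_eq_one_iff_adj.2 hlm] at hl_bm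
  omega

end Leaves

namespace IsMVSet

variable {V : Type*} {G : SimpleGraph V} {X : Set V}

lemma eq_or_eq_of_mem_geodesicInterval (hX : IsMVSet G X) (hG : G.IsTree) {u v w : V}
    (hu : u ∈ X) (hv : v ∈ X) (hw : w ∈ X) (hwuv : w ∈ geodesicInterval G u v) :
    w = u ∨ w = v := by
  by_cases huv : u = v
  · subst huv
    rw [geodesicInterval_self hG.connected] at hwuv
    exact Or.inl hwuv
  · obtain ⟨p, -, -, hpX⟩ := hX u hu v hv huv
    exact hpX w (mem_support_of_mem_geodesicInterval hG hwuv p) hw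

variable [Finite V] [Nontrivial V] [G.LocallyFinite]

lemma exists_mem_leaves_forall_mem_geodesicInterval (hX : IsMVSet G X) (hG : G.IsTree) {x : V}
    (hx : x ∈ X) : ∃ l ∈ leaves G, ∀ y ∈ X, x ∈ geodesicInterval G y l := by
  by_cases hb : ∃ b ∈ X, x ≠ b
  · obtain ⟨b, hbX, hxb⟩ := hb
    obtain ⟨l, hl, hxl⟩ := exists_mem_leaves_mem_geodesicInterval hG b x
    refine ⟨l, hl, fun y hy => ?_⟩
    rcases geodesicInterval_subset_union hG b y l hxl with hx_by | hx_yl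
    · obtain rfl := (hX.eq_or_eq_of_mem_geodesicInterval hG hbX hy hx hx_by).resolve_left hxb
      exact left_mem_geodesicInterval
    · exact hx_yl
  · push Not at hb
    obtain ⟨l, hl, hxl⟩ := exists_mem_leaves_mem_geodesicInterval hG x x
    exact ⟨l, hl, fun y hy => hb y hy ▸ hxl⟩

lemma ncard_le_ncard_leaves (hX : IsMVSet G X) (hG : G.IsTree) :
    X.ncard ≤ (leaves G).ncard := by
  choose! leaf hleaf hsep using
    fun x (hx : x ∈ X) => hX.exists_mem_leaves_forall_mem_geodesicInterval hG hx
  refine Set.ncard_le_ncard_of_injOn leaf hleaf fun x hx y hy hxy => ?_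
  exact eq_of_mem_geodesicInterval_of_mem_geodesicInterval hG.connected
    (hsep x hx y hy) (hxy ▸ hsep y hy x hx)

end IsMVSet

theorem stmt10 {V : Type*} [Fintype V] (T : SimpleGraph V) [DecidableRel T.Adj]
    (ht : T.IsTree) (h3 : 3 ≤ Fintype.card V) :
    IsMVSet T {v | T.degree v = 1} ∧ IsIndep T {v | T.degree v = 1} ∧
    mu T = {v | T.degree v = 1}.ncard ∧ muI T = {v | T.degree v = 1}.ncard := by
  have : Nontrivial V := Fintype.one_lt_card_iff_nontrivial.1 (by omega)
  have hMV : IsMVSet T (leaves T) := isMVSet_leaves ht.connected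
  have hIndep : IsIndep T (leaves T) := isIndep_leaves ht.connected (by simpa using h3)
  refine ⟨hMV, hIndep, IsGreatest.csSup_eq ⟨⟨_, hMV, rfl⟩, ?_⟩,
    IsGreatest.csSup_eq ⟨⟨_, hMV, hIndep, rfl⟩, ?_⟩⟩
  · rintro _ ⟨X, hX, rfl⟩
    exact hX.ncard_le_ncard_leaves ht
  · rintro _ ⟨X, hX, -, rfl⟩
    exact hX.ncard_le_ncard_leaves ht
end
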